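/- arXiv:2404.06476 — 2 statements merged into one kernel-verified Lean document; each statement's English description precedes it below -/
import Mathlib

section
/- If the maximal spectral type σ of a mixing automorphism T (restricted to the mean-zero subspace) is mutually singular with its fifth convolution power σ^{*5}, then every intertwining operator P : L²⊗⁵ → L² with P T⊗⁵ = T P and P* H ⊂ H⊗⁵ vanishes on H⊗⁵. -/
open MeasureTheory Filter
open scoped InnerProductSpace


lemma lie_mul_apply {E : Type*} [NormedAddCommGroup E] [InnerProductSpace ℂ E]
    (V W : E ≃ₗᵢ[ℂ] E) (x : E) : (V * W) x = V (W x) := rfl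

lemma spec_isom {E : Type*} [NormedAddCommGroup E] [InnerProductSpace ℂ E]
    (V : E ≃ₗᵢ[ℂ] E) (g : E) (τ : Measure (AddCircle (1 : ℝ))) [IsFiniteMeasure τ]
    (hτ : ∀ n : ℤ, ⟪(V ^ n) g, g⟫_ℂ = ∫ z, fourier n z ∂τ) (c : ℤ →₀ ℂ) :
    ‖Finsupp.linearCombination ℂ (fun n : ℤ => (V ^ (-n)) g) c‖ =
      ‖ContinuousMap.toLp 2 τ ℂ (Finsupp.linearCombination ℂ
        (fun n : ℤ => (fourier n : C(AddCircle (1 : ℝ), ℂ))) c)‖ := by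
  have hin : ∀ m n : ℤ, ⟪(V ^ (-m)) g, (V ^ (-n)) g⟫_ℂ =
      ⟪(ContinuousMap.toLp 2 τ ℂ (fourier m : C(AddCircle (1 : ℝ), ℂ)) : Lp ℂ 2 τ),
        ContinuousMap.toLp 2 τ ℂ (fourier n : C(AddCircle (1 : ℝ), ℂ))⟫_ℂ := by
    intro m n
    have h1 : (V ^ (-m)) g = (V ^ (-n)) ((V ^ (n - m)) g) := by
      rw [← lie_mul_apply, ← zpow_add]; congr 2; ring
    rw [h1, LinearIsometryEquiv.inner_map_map, hτ, ContinuousMap.inner_toLp]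
    congr 1; ext z
    rw [sub_eq_add_neg, fourier_add, fourier_neg]
  have h2 : ⟪Finsupp.linearCombination ℂ (fun n : ℤ => (V ^ (-n)) g) c,
      Finsupp.linearCombination ℂ (fun n : ℤ => (V ^ (-n)) g) c⟫_ℂ =
      ⟪(ContinuousMap.toLp 2 τ ℂ (Finsupp.linearCombination ℂ
        (fun n : ℤ => (fourier n : C(AddCircle (1 : ℝ), ℂ))) c) : Lp ℂ 2 τ),
        ContinuousMap.toLp 2 τ ℂ (Finsupp.linearCombination ℂ
        (fun n : ℤ => (fourier n : C(AddCircle (1 : ℝ), ℂ))) c)⟫_ℂ := by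
    simp only [Finsupp.linearCombination_apply, Finsupp.sum, map_sum, map_smul, sum_inner,
      inner_sum, inner_smul_left, inner_smul_right, hin]
  rw [inner_self_eq_norm_sq_to_K, inner_self_eq_norm_sq_to_K] at h2
  have h3 : ‖Finsupp.linearCombination ℂ (fun n : ℤ => (V ^ (-n)) g) c‖ ^ 2 =
      ‖(ContinuousMap.toLp 2 τ ℂ (Finsupp.linearCombination ℂ
        (fun n : ℤ => (fourier n : C(AddCircle (1 : ℝ), ℂ))) c) : Lp ℂ 2 τ)‖ ^ 2 := by
    exact_mod_cast h2
  exact (pow_left_inj₀ (norm_nonneg _) (norm_nonneg _) two_ne_zero).1 h3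

lemma finite_or_zero {E : Type*} [NormedAddCommGroup E] [InnerProductSpace ℂ E]
    (V : E ≃ₗᵢ[ℂ] E) (g : E) (τ : Measure (AddCircle (1 : ℝ)))
    (hτ : ∀ n : ℤ, ⟪(V ^ n) g, g⟫_ℂ = ∫ z, fourier n z ∂τ) (hg : g ≠ 0) :
    IsFiniteMeasure τ := by
  by_contra h
  apply hg
  have := hτ 0
  have h4 : τ Set.univ = ⊤ := by
    by_contra h5
    exact h ⟨lt_top_iff_ne_top.2 h5⟩
  simpa [Measure.real, h4] using this

lemma key_ineq {E F : Type*} [NormedAddCommGroup E] [InnerProductSpace ℂ E]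
    [NormedAddCommGroup F] [InnerProductSpace ℂ F]
    (V : E ≃ₗᵢ[ℂ] E) (W : F ≃ₗᵢ[ℂ] F) (A : E →L[ℂ] F) (hA : ∀ x, A (V x) = W (A x))
    (g : E) (τ ν : Measure (AddCircle (1 : ℝ))) [IsFiniteMeasure τ] [IsFiniteMeasure ν]
    (hτ : ∀ n : ℤ, ⟪(V ^ n) g, g⟫_ℂ = ∫ z, fourier n z ∂τ)
    (hν : ∀ n : ℤ, ⟪(W ^ n) (A g), A g⟫_ℂ = ∫ z, fourier n z ∂ν)
    (φ : C(AddCircle (1 : ℝ), ℂ)) :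
    ‖(ContinuousMap.toLp 2 ν ℂ φ : Lp ℂ 2 ν)‖ ≤
      ‖A‖ * ‖(ContinuousMap.toLp 2 τ ℂ φ : Lp ℂ 2 τ)‖ := by
  have hAn : ∀ (n : ℤ) x, A ((V ^ n) x) = (W ^ n) (A x) := by
    have hpos : ∀ (n : ℕ) x, A ((V ^ n) x) = (W ^ n) (A x) := by
      intro n
      induction n with
      | zero => intro x; simp
      | succ k ih => intro x; simp [pow_succ, lie_mul_apply, ih, hA]
    intro n x
    obtain ⟨k, rfl | rfl⟩ := n.eq_nat_or_neg
    · simpa using hpos k x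
    · have := hpos k ((V ^ (-(k : ℤ))) x)
      rw [← zpow_natCast, ← lie_mul_apply, ← zpow_add] at this
      simp only [add_neg_cancel, zpow_zero, LinearIsometryEquiv.coe_one, id_eq] at this
      rw [this, ← zpow_natCast, ← lie_mul_apply, ← zpow_add]
      simp
  have hcl : IsClosed {φ : C(AddCircle (1 : ℝ), ℂ) | ‖(ContinuousMap.toLp 2 ν ℂ φ : Lp ℂ 2 ν)‖ ≤
      ‖A‖ * ‖(ContinuousMap.toLp 2 τ ℂ φ : Lp ℂ 2 τ)‖} := by
    apply isClosed_le
    · exact (ContinuousMap.toLp 2 ν ℂ).continuous.norm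
    · exact continuous_const.mul (ContinuousMap.toLp 2 τ ℂ).continuous.norm
  have hsub : ((Submodule.span ℂ (Set.range (fun n : ℤ => (fourier n : C(AddCircle (1 : ℝ), ℂ))))
      : Submodule ℂ C(AddCircle (1 : ℝ), ℂ)) : Set _) ⊆
      {φ : C(AddCircle (1 : ℝ), ℂ) | ‖(ContinuousMap.toLp 2 ν ℂ φ : Lp ℂ 2 ν)‖ ≤
      ‖A‖ * ‖(ContinuousMap.toLp 2 τ ℂ φ : Lp ℂ 2 τ)‖} := by
    intro p hp
    rw [SetLike.mem_coe, Finsupp.mem_span_range_iff_exists_finsupp] at hp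
    obtain ⟨c, hc⟩ := hp
    change Finsupp.linearCombination ℂ _ c = p at hc
    subst hc
    rw [Set.mem_ofPred_eq, ← spec_isom V g τ hτ, ← spec_isom W (A g) ν hν]
    refine le_trans (le_of_eq ?_) (A.le_opNorm _)
    congr 1
    simp only [Finsupp.linearCombination_apply, Finsupp.sum, map_sum, map_smul, hAn]
  have h := closure_minimal hsub hcl
  have htop : φ ∈ (Submodule.span ℂ (Set.range
      (fun n : ℤ => (fourier n : C(AddCircle (1 : ℝ), ℂ))))).topologicalClosure := by
    rw [span_fourier_closure_eq_top]; trivial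
  exact h htop

lemma norm_toLp_sq (τ : Measure (AddCircle (1 : ℝ))) [IsFiniteMeasure τ]
    (φ : C(AddCircle (1 : ℝ), ℂ)) :
    ‖(ContinuousMap.toLp 2 τ ℂ φ : Lp ℂ 2 τ)‖ ^ 2 = ∫ z, ‖φ z‖ ^ 2 ∂τ := by
  have h := ContinuousMap.inner_toLp (𝕜 := ℂ) τ φ φ
  rw [inner_self_eq_norm_sq_to_K] at h
  have h2 : (∫ z, φ z * (starRingEnd ℂ) (φ z) ∂τ) = ((∫ z, ‖φ z‖ ^ 2 ∂τ : ℝ) : ℂ) := by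
    rw [← integral_complex_ofReal]
    congr 1; ext z
    rw [Complex.mul_conj, Complex.normSq_eq_norm_sq]
  rw [h2] at h
  apply Complex.ofReal_injective
  rw [← h]
  push_cast
  rfl

lemma key_sing {E F : Type*} [NormedAddCommGroup E] [InnerProductSpace ℂ E]
    [NormedAddCommGroup F] [InnerProductSpace ℂ F]
    (V : E ≃ₗᵢ[ℂ] E) (W : F ≃ₗᵢ[ℂ] F) (A : E →L[ℂ] F) (hA : ∀ x, A (V x) = W (A x))
    (g : E) (τ ν : Measure (AddCircle (1 : ℝ)))
    (hτ : ∀ n : ℤ, ⟪(V ^ n) g, g⟫_ℂ = ∫ z, fourier n z ∂τ)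
    (hν : ∀ n : ℤ, ⟪(W ^ n) (A g), A g⟫_ℂ = ∫ z, fourier n z ∂ν)
    (hs : τ ⟂ₘ ν) : A g = 0 := by
  by_contra hne
  have hg : g ≠ 0 := by rintro rfl; simp at hne
  have := finite_or_zero V g τ hτ hg
  have := finite_or_zero W (A g) ν hν hne
  have hF : ∀ K : Set (AddCircle (1 : ℝ)), IsClosed K → ν.real K ≤ ‖A‖ ^ 2 * τ.real K := by
    intro K hK
    let δ : ℕ → ℝ := fun n => 1 / ((n : ℝ) + 1)
    have δpos : ∀ n, 0 < δ n := fun n => by positivity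
    have δlim : Tendsto δ atTop (nhds 0) := tendsto_one_div_add_atTop_nhds_zero_nat
    let φ : ℕ → C(AddCircle (1 : ℝ), ℂ) := fun n =>
      ⟨fun z => ((thickenedIndicator (δpos n) K z : ℝ) : ℂ), by fun_prop⟩
    have hφ : ∀ n z, ‖φ n z‖ ^ 2 = (thickenedIndicator (δpos n) K z : ℝ) ^ 2 := by
      intro n z; simp [φ]
    have hlim : ∀ (ρ : Measure (AddCircle (1 : ℝ))) [IsFiniteMeasure ρ],
        Tendsto (fun n => ∫ z, ‖φ n z‖ ^ 2 ∂ρ) atTop (nhds (ρ.real K)) := by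
      intro ρ _
      rw [← integral_indicator_one hK.measurableSet]
      refine tendsto_integral_of_dominated_convergence (fun _ => 1) ?_ (integrable_const _) ?_ ?_
      · intro n
        exact (by fun_prop : Continuous fun z => ‖φ n z‖ ^ 2).aestronglyMeasurable
      · intro n
        refine Eventually.of_forall fun z => ?_
        rw [hφ, Real.norm_of_nonneg (by positivity)]
        exact pow_le_one₀ (NNReal.coe_nonneg _) (by exact_mod_cast thickenedIndicator_le_one (δpos n) K z)
      · refine Eventually.of_forall fun z => ?_
        simp only [hφ]
        have h1 := tendsto_pi_nhds.1 (thickenedIndicator_tendsto_indicator_closure δpos δlim K) z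
        rw [hK.closure_eq] at h1
        have h2 := ((NNReal.continuous_coe.tendsto _).comp h1).pow 2
        refine (h2.congr fun n => rfl).congr' ?_ |>.trans (le_of_eq ?_)
        · exact EventuallyEq.rfl
        · by_cases hz : z ∈ K <;> simp [hz]
    refine le_of_tendsto_of_tendsto' (hlim ν) ((hlim τ).const_mul _) fun n => ?_
    rw [← norm_toLp_sq, ← norm_toLp_sq, ← mul_pow]
    exact pow_le_pow_left₀ (norm_nonneg _) (key_ineq V W A hA g τ ν hτ hν _) 2
  obtain ⟨S, hS, hS1, hS2⟩ := hs
  have hν0 : ν S = 0 := by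
    rw [hS.measure_eq_iSup_isClosed_of_ne_top (measure_ne_top _ _)]
    simp only [ENNReal.iSup_eq_zero]
    intro K hKS hK
    have h := hF K hK
    have h0 : τ.real K = 0 := by simp [Measure.real, measure_mono_null hKS hS1]
    rw [h0, mul_zero] at h
    have h' := le_antisymm h measureReal_nonneg
    simpa [measureReal_eq_zero_iff] using h'
  have hν : ν = 0 := by
    rw [← Measure.measure_univ_eq_zero, ← Set.union_compl_self S]
    exact measure_union_null hν0 hS2
  have h0 := ‹∀ n : ℤ, ⟪(W ^ n) (A g), A g⟫_ℂ = ∫ z, fourier n z ∂ν› 0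
  rw [hν] at h0
  simp at h0
  exact hne h0

lemma closed_tendsto {E : Type*} [NormedAddCommGroup E] (φ : ℕ → E → ℂ) (K : ℝ)
    (hK : ∀ n x y, ‖φ n x - φ n y‖ ≤ K * ‖x - y‖) :
    IsClosed {x | Tendsto (fun n => φ n x) atTop (nhds 0)} := by
  rw [← isSeqClosed_iff_isClosed]
  intro u x hu hx
  have hux : Tendsto (fun k => K * ‖x - u k‖) atTop (nhds 0) := by
    have : Tendsto (fun k => K * ‖x - u k‖) atTop (nhds (K * ‖x - x‖)) :=
      ((tendsto_const_nhds.sub hx).norm).const_mul K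
    simpa using this
  change Tendsto (fun n => φ n x) atTop (nhds 0)
  rw [Metric.tendsto_atTop]
  intro ε hε
  obtain ⟨k, hk⟩ := (hux.eventually (gt_mem_nhds (half_pos hε))).exists
  have huk : Tendsto (fun n => φ n (u k)) atTop (nhds 0) := hu k
  obtain ⟨N, hN⟩ := Metric.tendsto_atTop.1 huk (ε / 2) (half_pos hε)
  refine ⟨N, fun n hn => ?_⟩
  have h1 := hN n hn
  have h2 := hK n x (u k)
  rw [dist_zero_right] at h1 ⊢
  have h3 : ‖φ n x‖ ≤ ‖φ n x - φ n (u k)‖ + ‖φ n (u k)‖ := by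
    simpa using norm_add_le (φ n x - φ n (u k)) (φ n (u k))
  linarith

lemma koop_pow {X : Type*} [MeasurableSpace X] (μ : Measure X)
    (T : X ≃ᵐ X) (hT : MeasurePreserving T μ μ)
    (U : Lp ℂ 2 μ ≃ₗᵢ[ℂ] Lp ℂ 2 μ)
    (hU : ∀ f : Lp ℂ 2 μ, (U f : X → ℂ) =ᵐ[μ] fun x => f (T.symm x)) (f : Lp ℂ 2 μ) (n : ℕ) :
    ((U ^ n) f : X → ℂ) =ᵐ[μ] fun x => f (T.symm^[n] x) := by
  induction n with
  | zero => simp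
  | succ k ih =>
    rw [pow_succ']
    refine (hU ((U ^ k) f)).trans ?_
    have := (hT.symm T).quasiMeasurePreserving.ae_eq_comp ih
    exact this

lemma mix_lemma {X : Type*} [MeasurableSpace X]
    (μ : Measure X) [IsProbabilityMeasure μ]
    (T : X ≃ᵐ X) (hT : MeasurePreserving T μ μ)
    (hmix : ∀ A B : Set X, MeasurableSet A → MeasurableSet B →
      Tendsto (fun m : ℕ => μ (A ∩ (⇑T)^[m] '' B)) atTop (nhds (μ A * μ B)))
    (U : Lp ℂ 2 μ ≃ₗᵢ[ℂ] Lp ℂ 2 μ)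
    (hU : ∀ f : Lp ℂ 2 μ, (U f : X → ℂ) =ᵐ[μ] fun x => f (T.symm x)) (e : Lp ℂ 2 μ)
    (he : e = indicatorConstLp 2 MeasurableSet.univ (measure_ne_top μ _) (1 : ℂ))
    (f h : Lp ℂ 2 μ) :
    Tendsto (fun n : ℕ => ⟪(U ^ n) f, h⟫_ℂ - ⟪f, e⟫_ℂ * ⟪e, h⟫_ℂ) atTop (nhds 0) := by
  revert f
  refine Lp.induction (by simp) _ ?_ ?_ ?_
  · intro c B hB hμB
    revert h
    refine Lp.induction (by simp) _ ?_ ?_ ?_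
    · intro d A hA hμA
      rw [Lp.simpleFunc.coe_indicatorConst, Lp.simpleFunc.coe_indicatorConst]
      have himg : ∀ n : ℕ, (⇑T)^[n] '' B = (⇑T.symm)^[n] ⁻¹' B := fun n =>
        Set.image_eq_preimage_of_inverse
          (Function.LeftInverse.iterate T.symm_apply_apply n)
          (Function.RightInverse.iterate T.apply_symm_apply n) |> fun h => congrFun h B
      have hms : ∀ n : ℕ, MeasurableSet ((⇑T)^[n] '' B) := fun n => by
        rw [himg]; exact (T.symm.measurable.iterate n) hB
      have hUn : ∀ n : ℕ, (U ^ n) (indicatorConstLp 2 hB hμB.ne c) =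
          indicatorConstLp 2 (hms n) (measure_ne_top μ _) c := by
        intro n
        apply Lp.ext
        refine (koop_pow μ T hT U hU _ n).trans ?_
        have h1 := ((hT.symm T).iterate n).quasiMeasurePreserving.ae_eq_comp
          (indicatorConstLp_coeFn (p := 2) (hs := hB) (hμs := hμB.ne) (c := c))
        refine h1.trans ?_
        refine EventuallyEq.trans ?_ indicatorConstLp_coeFn.symm
        refine Eventually.of_forall fun x => ?_
        simp only [himg, Function.comp]
        rfl
      subst he
      simp only [hUn, L2.inner_indicatorConstLp_indicatorConstLp]
      have h2 := (ENNReal.tendsto_toReal (by finiteness)).comp (hmix A B hA hB)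
      have h3 : Tendsto (fun n : ℕ => (((μ (A ∩ (⇑T)^[n] '' B)).toReal : ℝ) : ℂ)) atTop
          (nhds (((μ A * μ B).toReal : ℝ) : ℂ)) := (Complex.continuous_ofReal.tendsto _).comp h2
      have h4 := (h3.mul_const (⟪c, d⟫_ℂ)).sub_const ((((μ A * μ B).toReal : ℝ) : ℂ) * ⟪c, d⟫_ℂ)
      rw [sub_self] at h4
      refine h4.congr fun n => ?_
      simp [Measure.real, Set.inter_comm]
      ring
    · intro f g hf hg _ h1 h2
      have := h1.add h2
      rw [add_zero] at this
      refine this.congr fun n => ?_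
      simp only [inner_add_right]; ring
    · refine closed_tendsto _ (‖(Lp.simpleFunc.indicatorConst 2 hB hμB.ne c : Lp ℂ 2 μ)‖ +
        ‖⟪(Lp.simpleFunc.indicatorConst 2 hB hμB.ne c : Lp ℂ 2 μ), e⟫_ℂ‖ * ‖e‖) ?_
      intro n x y
      generalize (Lp.simpleFunc.indicatorConst 2 hB hμB.ne c : Lp ℂ 2 μ) = b
      have : ⟪(U ^ n) b, x⟫_ℂ - ⟪b, e⟫_ℂ * ⟪e, x⟫_ℂ - (⟪(U ^ n) b, y⟫_ℂ - ⟪b, e⟫_ℂ * ⟪e, y⟫_ℂ) =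
          ⟪(U ^ n) b, x - y⟫_ℂ - ⟪b, e⟫_ℂ * ⟪e, x - y⟫_ℂ := by
        simp only [inner_sub_right]; ring
      rw [this]
      refine (norm_sub_le _ _).trans ?_
      rw [add_mul, norm_mul, mul_assoc]
      gcongr
      · simpa using norm_inner_le_norm (𝕜 := ℂ) ((U ^ n) b) (x - y)
      · exact norm_inner_le_norm _ _
  · intro f g hf hg _ h1 h2
    have := h1.add h2
    rw [add_zero] at this
    refine this.congr fun n => ?_
    simp only [inner_add_left, map_add]; ring
  · refine closed_tendsto _ (‖h‖ + ‖e‖ * ‖⟪e, h⟫_ℂ‖) ?_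
    intro n x y
    have : ⟪(U ^ n) x, h⟫_ℂ - ⟪x, e⟫_ℂ * ⟪e, h⟫_ℂ - (⟪(U ^ n) y, h⟫_ℂ - ⟪y, e⟫_ℂ * ⟪e, h⟫_ℂ) =
        ⟪(U ^ n) (x - y), h⟫_ℂ - ⟪x - y, e⟫_ℂ * ⟪e, h⟫_ℂ := by
      simp only [inner_sub_left, map_sub]; ring
    rw [this]
    refine (norm_sub_le _ _).trans ?_
    have h1 : ‖⟪(U ^ n) (x - y), h⟫_ℂ‖ ≤ ‖x - y‖ * ‖h‖ := by
      have h0 := norm_inner_le_norm (𝕜 := ℂ) ((U ^ n) (x - y)) h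
      rwa [LinearIsometryEquiv.norm_map] at h0
    have h2 : ‖⟪x - y, e⟫_ℂ‖ * ‖⟪e, h⟫_ℂ‖ ≤ ‖x - y‖ * ‖e‖ * ‖⟪e, h⟫_ℂ‖ := by
      gcongr
      exact norm_inner_le_norm _ _
    rw [norm_mul]
    linarith

lemma avg_pow (w : ℂ) (hw : ‖w‖ = 1) :
    Tendsto (fun n : ℕ => ((n : ℝ)⁻¹ : ℝ) • ∑ i ∈ Finset.range n, w ^ i) atTop
      (nhds (if w = 1 then 1 else 0)) := by
  split_ifs with h
  · subst h
    simpa using (tendsto_const_nhds (x := (1 : ℂ)) (f := atTop (α := ℕ))).cesaro_smul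
  · have hb : ∀ n : ℕ, ‖((n : ℝ)⁻¹ : ℝ) • ∑ i ∈ Finset.range n, w ^ i‖ ≤
        (n : ℝ)⁻¹ * (2 / ‖w - 1‖) := by
      intro n
      rw [norm_smul, geom_sum_eq h, norm_div, Real.norm_of_nonneg (by positivity)]
      gcongr
      refine (norm_sub_le _ _).trans ?_
      simp [hw]; norm_num
    refine squeeze_zero_norm hb ?_
    simpa using (tendsto_inv_atTop_nhds_zero_nat (𝕜 := ℝ)).mul_const (2 / ‖w - 1‖)

lemma no_atom (σ : Measure (AddCircle (1 : ℝ))) [IsFiniteMeasure σ]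
    (h : Tendsto (fun n : ℕ => ∫ z, fourier (n : ℤ) z ∂σ) atTop (nhds 0))
    (a : AddCircle (1 : ℝ)) : σ {a} = 0 := by
  have hpow : ∀ (i : ℕ) (z : AddCircle (1 : ℝ)), (fourier (i : ℤ) z : ℂ) = (fourier 1 z : ℂ) ^ i := by
    intro i z
    simp [fourier_apply, AddCircle.toCircle_nsmul]
  have hn : ∀ (i : ℤ) (z : AddCircle (1 : ℝ)), ‖(fourier i z : ℂ)‖ = 1 := by
    intro i z
    rw [fourier_apply]; exact Circle.norm_coe _
  have hint : ∀ i : ℤ, Integrable (fun z : AddCircle (1 : ℝ) => (fourier i z : ℂ)) σ := fun i =>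
    (integrable_const (1 : ℝ)).mono' (fourier i).continuous.aestronglyMeasurable
      (Eventually.of_forall fun z => (hn i z).le)
  have hmul : ∀ (i : ℤ) (z : AddCircle (1 : ℝ)),
      (fourier i (z - a) : ℂ) = fourier i z * fourier i (-a) := by
    intro i z
    simp [fourier_apply, sub_eq_add_neg, AddCircle.toCircle_add]
  have h1 : Tendsto (fun n : ℕ => ∫ z, ((n : ℝ)⁻¹ : ℝ) • ∑ i ∈ Finset.range n,
      (fourier (i : ℤ) (z - a) : ℂ) ∂σ) atTop (nhds 0) := by
    have h2 : Tendsto (fun n : ℕ => (∫ z, fourier (n : ℤ) z ∂σ) * (fourier (n : ℤ) (-a) : ℂ))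
        atTop (nhds 0) := by
      rw [tendsto_zero_iff_norm_tendsto_zero] at h ⊢
      simpa only [norm_mul, hn, mul_one] using h
    refine h2.cesaro_smul.congr fun n => ?_
    rw [integral_smul, integral_finsetSum]
    · simp only [hmul, integral_mul_const]
    · intro i _
      simp only [hmul]
      exact (hint i).mul_const _
  have h2 : Tendsto (fun n : ℕ => ∫ z, ((n : ℝ)⁻¹ : ℝ) • ∑ i ∈ Finset.range n,
      (fourier (i : ℤ) (z - a) : ℂ) ∂σ) atTop (nhds (∫ z, Set.indicator {a} (fun _ => (1 : ℂ)) z ∂σ)) := by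
    refine tendsto_integral_of_dominated_convergence (fun _ => 1) ?_ (integrable_const _) ?_ ?_
    · intro n
      refine Continuous.aestronglyMeasurable ?_
      refine Continuous.fun_const_smul (continuous_finsetSum _ fun i _ => ?_) _
      exact (fourier (i : ℤ)).continuous.comp (continuous_id.sub continuous_const)
    · intro n
      refine Eventually.of_forall fun z => ?_
      rw [norm_smul, Real.norm_of_nonneg (by positivity)]
      have : ‖∑ i ∈ Finset.range n, (fourier (i : ℤ) (z - a) : ℂ)‖ ≤ n := by
        refine (norm_sum_le _ _).trans ?_
        simp only [hn]; simp
      calc (n : ℝ)⁻¹ * _ ≤ (n : ℝ)⁻¹ * n := by gcongr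
        _ ≤ 1 := inv_mul_le_one
    · refine Eventually.of_forall fun z => ?_
      have h3 := avg_pow (fourier 1 (z - a)) (hn _ _)
      simp only [← hpow] at h3
      convert h3 using 2
      by_cases hz : z = a
      · subst hz; simp
      · have : (fourier 1 (z - a) : ℂ) ≠ 1 := by
          intro h4
          rw [fourier_one] at h4
          have h5 : AddCircle.toCircle (z - a) = AddCircle.toCircle (0 : AddCircle (1 : ℝ)) := by
            rw [AddCircle.toCircle_zero]
            exact Circle.ext (by rw [h4]; rfl)
          exact hz (sub_eq_zero.1 (AddCircle.injective_toCircle one_ne_zero h5))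
        rw [if_neg this]; simp [hz]
  have h3 := tendsto_nhds_unique h1 h2
  rw [integral_indicator_const _ (measurableSet_singleton a)] at h3
  have h4 : σ.real {a} = 0 := by simpa using h3.symm
  simpa [measureReal_eq_zero_iff] using h4

lemma conv_no_atom (σ ν : Measure (AddCircle (1 : ℝ))) [IsFiniteMeasure σ] [IsFiniteMeasure ν]
    (h : ∀ a, σ {a} = 0) (a : AddCircle (1 : ℝ)) : (σ.conv ν) {a} = 0 := by
  rw [Measure.conv, Measure.map_apply measurable_add (measurableSet_singleton a),
    Measure.prod_apply_symm (measurable_add (measurableSet_singleton a))]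
  refine (lintegral_congr fun y => ?_).trans lintegral_zero
  rw [← h (a - y)]
  congr 1
  ext x
  simp [eq_sub_iff_add_eq]

/-- If the maximal spectral type `σ` of a mixing automorphism `T` (on the mean-zero
subspace `H`) is mutually singular with `σ^{*5}`, then every operator
`P : L²(μ)^{⊗5} → L²(μ)` with `P T^{⊗5} = T P` and `P* H ⊆ H^{⊗5}` vanishes on `H^{⊗5}`. -/
theorem intertwiner_vanishes_of_spectral_singularity
    {X : Type*} [MeasurableSpace X] [StandardBorelSpace X]
    (μ : Measure X) [IsProbabilityMeasure μ]
    (T : X ≃ᵐ X) (hT : MeasurePreserving T μ μ)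
    (hmix : ∀ A B : Set X, MeasurableSet A → MeasurableSet B →
      Tendsto (fun m : ℕ => μ (A ∩ (⇑T)^[m] '' B)) atTop (nhds (μ A * μ B)))
    -- the unitary Koopman operators of T on L²(μ) and of T×⋯×T on L²(μ^{⊗5})
    (U : Lp ℂ 2 μ ≃ₗᵢ[ℂ] Lp ℂ 2 μ)
    (hU : ∀ f : Lp ℂ 2 μ, (U f : X → ℂ) =ᵐ[μ] fun x => f (T.symm x))
    (U₅ : Lp ℂ 2 (Measure.pi fun _ : Fin 5 => μ) ≃ₗᵢ[ℂ] Lp ℂ 2 (Measure.pi fun _ : Fin 5 => μ))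
    (hU₅ : ∀ g : Lp ℂ 2 (Measure.pi fun _ : Fin 5 => μ),
      (U₅ g : (Fin 5 → X) → ℂ) =ᵐ[Measure.pi fun _ : Fin 5 => μ]
        fun p => g fun i => T.symm (p i))
    -- σ : the maximal spectral type of U on the mean-zero subspace H
    (σ : Measure (AddCircle (1 : ℝ))) [IsFiniteMeasure σ]
    (hspec : ∀ f : Lp ℂ 2 μ, ∫ x, f x ∂μ = 0 →
      ∃ σf : Measure (AddCircle (1 : ℝ)), σf ≪ σ ∧
        ∀ n : ℤ, ⟪(U ^ n) f, f⟫_ℂ = ∫ z, fourier n z ∂σf)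
    (hmax : ∃ f : Lp ℂ 2 μ, ∫ x, f x ∂μ = 0 ∧
      ∀ n : ℤ, ⟪(U ^ n) f, f⟫_ℂ = ∫ z, fourier n z ∂σ)
    -- the spectral type of U^{⊗5} on H^{⊗5} is absolutely continuous w.r.t. σ^{*5}
    (hspec5 : ∀ g : Lp ℂ 2 (Measure.pi fun _ : Fin 5 => μ),
      (∀ j : Fin 5, ∀ᵐ p ∂(Measure.pi fun _ : Fin 5 => μ),
        ∫ x, (g : (Fin 5 → X) → ℂ) (Function.update p j x) ∂μ = 0) →
      ∃ τ : Measure (AddCircle (1 : ℝ)), τ ≪ σ.conv (σ.conv (σ.conv (σ.conv σ))) ∧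
        ∀ n : ℤ, ⟪(U₅ ^ n) g, g⟫_ℂ = ∫ z, fourier n z ∂τ)
    -- σ is mutually singular with its fifth convolution power
    (hsing : σ ⟂ₘ σ.conv (σ.conv (σ.conv (σ.conv σ))))
    -- P : an intertwining operator with P* H ⊆ H^{⊗5}
    (P : Lp ℂ 2 (Measure.pi fun _ : Fin 5 => μ) →L[ℂ] Lp ℂ 2 μ)
    (hPint : ∀ g, P (U₅ g) = U (P g))
    (hPH : ∀ f : Lp ℂ 2 μ, ∫ x, f x ∂μ = 0 → ∀ j : Fin 5,
      ∀ᵐ p ∂(Measure.pi fun _ : Fin 5 => μ),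
        ∫ x, (ContinuousLinearMap.adjoint P f) (Function.update p j x) ∂μ = 0) :
    ∀ g : Lp ℂ 2 (Measure.pi fun _ : Fin 5 => μ),
      (∀ j : Fin 5, ∀ᵐ p ∂(Measure.pi fun _ : Fin 5 => μ),
        ∫ x, (g : (Fin 5 → X) → ℂ) (Function.update p j x) ∂μ = 0) →
      P g = 0 := by
  intro g hg
  obtain ⟨τ, hτσ, hτ⟩ := hspec5 g hg
  let e : Lp ℂ 2 μ := indicatorConstLp 2 MeasurableSet.univ (measure_ne_top μ _) (1 : ℂ)
  have hein : ∀ f : Lp ℂ 2 μ, ⟪e, f⟫_ℂ = ∫ x, f x ∂μ := by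
    intro f
    rw [L2.inner_indicatorConstLp_one, setIntegral_univ]
  have hUe : U e = e := by
    apply Lp.ext
    have h1 : (e : X → ℂ) =ᵐ[μ] fun _ => 1 := by
      refine (indicatorConstLp_coeFn (p := 2) (hs := MeasurableSet.univ)
        (hμs := measure_ne_top μ _) (c := (1 : ℂ))).trans ?_
      rw [Set.indicator_univ]
    have h2 := (hT.symm T).quasiMeasurePreserving.ae_eq_comp h1
    exact (hU e).trans (h2.trans h1.symm)
  -- σ has no atoms, by mixing
  have hatom : ∀ a, σ {a} = 0 := by
    obtain ⟨f, hf0, hf⟩ := hmax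
    apply no_atom
    have h1 := mix_lemma μ T hT hmix U hU e rfl f f
    rw [hein f, hf0] at h1
    refine h1.congr fun n => ?_
    rw [← hf, zpow_natCast, mul_zero, sub_zero]
  have hτ0 : τ {0} = 0 := hτσ (conv_no_atom σ _ hatom 0)
  -- `P g` has mean zero
  have hmean : ∫ x, P g x ∂μ = 0 := by
    have h1 := key_sing U₅ (1 : ℂ ≃ₗᵢ[ℂ] ℂ) ((innerSL ℂ e).comp P) ?_ g τ
      (ENNReal.ofReal (‖((innerSL ℂ e).comp P) g‖ ^ 2) • Measure.dirac 0) hτ ?_ ?_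
    · rw [← hein]
      exact h1
    · intro x
      change ⟪e, P (U₅ x)⟫_ℂ = ⟪e, P x⟫_ℂ
      rw [hPint]
      conv_lhs => rw [← hUe]
      exact LinearIsometryEquiv.inner_map_map _ _ _
    · intro n
      rw [one_zpow, integral_smul_measure, integral_dirac, fourier_eval_zero,
        ENNReal.toReal_ofReal (by positivity)]
      change ⟪_, _⟫_ℂ = _
      rw [LinearIsometryEquiv.coe_one, id_eq, inner_self_eq_norm_sq_to_K]
      simp
    · refine ⟨{0}, measurableSet_singleton _, hτ0, ?_⟩
      simp
  obtain ⟨ν, hνσ, hν⟩ := hspec (P g) hmean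
  exact key_sing U₅ U P hPint g τ ν hτ hν ((hsing.mono_ac hνσ hτσ).symm)
end

section
/- If the maximal spectral type σ of a mixing automorphism T has, for some m ≠ n, mutually singular convolution powers σ^{*m} and σ^{*n}, then σ is singular with respect to Lebesgue measure on the circle. -/
open MeasureTheory Filter
open scoped InnerProductSpace

/-- The `m`-fold convolution power of a measure on the circle. -/
noncomputable def convPow (σ : Measure (AddCircle (1 : ℝ))) : ℕ → Measure (AddCircle (1 : ℝ))
  | 0 => Measure.dirac 0
  | n + 1 => (convPow σ n).conv σ

theorem aux_conv_null (α β : Measure (AddCircle (1 : ℝ))) [IsFiniteMeasure α] [IsFiniteMeasure β]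
    {A : Set (AddCircle (1 : ℝ))} (hA : MeasurableSet A) :
    (α.conv β) A = 0 ↔ ∀ᵐ x ∂α, β ((fun y => x + y) ⁻¹' A) = 0 := by
  have h2 : Measurable (fun p : AddCircle (1 : ℝ) × AddCircle (1 : ℝ) => p.1 + p.2) :=
    measurable_fst.add measurable_snd
  rw [Measure.conv, Measure.map_apply h2 hA, Measure.measure_prod_null (h2 hA)]
  rfl

open scoped Pointwise in
theorem aux_steinhaus {E : Set (AddCircle (1 : ℝ))} (hE : MeasurableSet E)
    (hpos : 0 < (volume : Measure (AddCircle (1 : ℝ))) E) :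
    ∀ᶠ y in nhds (0 : AddCircle (1 : ℝ)),
      (volume : Measure (AddCircle (1 : ℝ))) (E ∩ (fun x => y + x) ⁻¹' E) ≠ 0 := by
  obtain ⟨K, hKE, hK, hKpos⟩ := hE.exists_lt_isCompact hpos
  have h := tendsto_measure_vadd_sdiff_isCompact_isClosed
    (μ := (volume : Measure (AddCircle (1 : ℝ)))) hK hK.isClosed
  filter_upwards [h.eventually_lt_const hKpos] with y hy h0
  have h1 : volume ((fun x => y + x) ⁻¹' ((y +ᵥ K) ∩ K)) = 0 := by
    refine measure_mono_null ?_ h0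
    rintro x ⟨⟨z, hz, hzx⟩, hx⟩
    have : z = x := by simpa using hzx
    subst this
    exact ⟨hKE hz, hKE hx⟩
  rw [measure_preimage_add] at h1
  have h2 := measure_inter_add_sdiff (μ := (volume : Measure (AddCircle (1 : ℝ)))) (y +ᵥ K)
    hK.measurableSet
  rw [h1, zero_add, measure_vadd] at h2
  exact absurd hy (by rw [h2]; exact lt_irrefl _)

theorem aux_not_sing_conv (ν ρ : Measure (AddCircle (1 : ℝ))) [IsFiniteMeasure ν]
    [IsFiniteMeasure ρ] (hν : ¬ ν ⟂ₘ (volume : Measure (AddCircle (1 : ℝ))))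
    (hρ : ∀ N ∈ nhds (0 : AddCircle (1 : ℝ)), ρ N ≠ 0) : ¬ ν ⟂ₘ (ρ.conv ν) := by
  rintro ⟨A, hA, hA0, hA1⟩
  obtain ⟨ε, hε, E, hE, hEpos, hEle⟩ := Measure.exists_positive_of_not_mutuallySingular _ _ hν
  have key : ∀ B, MeasurableSet B → ν B = 0 →
      (volume : Measure (AddCircle (1 : ℝ))) (B ∩ E) = 0 := by
    intro B hB hB0
    have h := hEle B hB
    rw [measure_mono_null Set.inter_subset_left hB0] at h
    have := nonpos_iff_eq_zero.1 h
    rcases mul_eq_zero.1 this with h | h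
    · exact absurd (by exact_mod_cast h) hε.ne'
    · exact h
  rw [aux_conv_null _ _ hA.compl] at hA1
  have hst := aux_steinhaus hE hEpos
  apply hρ _ hst
  refine measure_mono_null ?_ hA1
  intro y hy hy'
  apply hy
  have e1 := key _ hA hA0
  have hm : Measurable (fun x : AddCircle (1 : ℝ) => y + x) := measurable_const_add y
  have e2 := key _ (hm hA.compl) hy'
  have e3 : (volume : Measure (AddCircle (1 : ℝ))) ((fun x => y + x) ⁻¹' (A ∩ E)) = 0 := by
    rw [measure_preimage_add]; exact e1
  refine measure_mono_null ?_ (measure_union_null e2 e3)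
  rintro x ⟨hx, hx'⟩
  by_cases h : y + x ∈ A
  · exact Or.inr ⟨h, hx'⟩
  · exact Or.inl ⟨h, hx⟩

instance aux_convPow_fin (σ : Measure (AddCircle (1 : ℝ))) [IsFiniteMeasure σ] (n : ℕ) :
    IsFiniteMeasure (convPow σ n) := by
  induction n with
  | zero => unfold convPow; infer_instance
  | succ n ih => unfold convPow; infer_instance

theorem aux_supp (σ : Measure (AddCircle (1 : ℝ))) [IsFiniteMeasure σ]
    (h0 : ∀ N ∈ nhds (0 : AddCircle (1 : ℝ)), σ N ≠ 0) (n : ℕ) :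
    ∀ N ∈ nhds (0 : AddCircle (1 : ℝ)), convPow σ n N ≠ 0 := by
  induction n with
  | zero =>
    intro N hN
    simp [convPow, mem_of_mem_nhds hN]
  | succ n ih =>
    intro N hN h
    obtain ⟨V, hVN, hV, hV0⟩ := mem_nhds_iff.1 hN
    have h' := measure_mono_null hVN h
    rw [convPow, aux_conv_null _ _ hV.measurableSet] at h'
    refine ih V (hV.mem_nhds hV0) (measure_mono_null ?_ h')
    intro x hx
    apply h0
    exact (hV.preimage (continuous_const_add x)).mem_nhds (by simpa using hx)

theorem aux_conv_not_sing (τ σ : Measure (AddCircle (1 : ℝ))) [IsFiniteMeasure τ]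
    [IsFiniteMeasure σ] (hσ : ¬ σ ⟂ₘ (volume : Measure (AddCircle (1 : ℝ)))) (hτ : τ ≠ 0) :
    ¬ (τ.conv σ) ⟂ₘ (volume : Measure (AddCircle (1 : ℝ))) := by
  rintro ⟨A, hA, hA0, hA1⟩
  rw [aux_conv_null _ _ hA] at hA0
  have : (ae τ).NeBot := ae_neBot.2 hτ
  obtain ⟨x, hx⟩ := hA0.exists
  refine hσ ⟨_, measurable_const_add x hA, hx, ?_⟩
  rw [← Set.preimage_compl, measure_preimage_add]
  exact hA1

theorem aux_convPow_add (σ : Measure (AddCircle (1 : ℝ))) [IsFiniteMeasure σ] (k m : ℕ) :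
    convPow σ (k + m) = (convPow σ k).conv (convPow σ m) := by
  induction m with
  | zero => simp [convPow]
  | succ m ih =>
    rw [← add_assoc, convPow, ih, convPow, Measure.conv_assoc]

theorem aux_main (σ : Measure (AddCircle (1 : ℝ))) [IsFiniteMeasure σ]
    (h0 : ∀ N ∈ nhds (0 : AddCircle (1 : ℝ)), σ N ≠ 0)
    (hσ : ¬ σ ⟂ₘ (volume : Measure (AddCircle (1 : ℝ))))
    (m k : ℕ) (hm : 1 ≤ m) : ¬ convPow σ m ⟂ₘ convPow σ (k + m) := by
  rw [aux_convPow_add]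
  apply aux_not_sing_conv _ _ _ (aux_supp σ h0 k)
  obtain ⟨m, rfl⟩ := Nat.exists_eq_add_of_le' hm
  rw [convPow]
  apply aux_conv_not_sing _ _ hσ
  intro h
  apply aux_supp σ h0 m Set.univ Filter.univ_mem
  rw [h]; rfl

theorem aux_exists_set {X : Type*} [MeasurableSpace X] (μ : Measure X) [IsProbabilityMeasure μ]
    (f : Lp ℂ 2 μ) (hf : ∫ x, f x ∂μ = 0) (hf0 : f ≠ 0) :
    ∃ A, MeasurableSet A ∧ 0 < μ.real A ∧ μ.real A < 1 := by
  by_contra! hcon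
  apply hf0
  have hc : ∃ a, (f : X → ℂ) =ᵐ[μ] Function.const X a := by
    apply exists_eventuallyEq_const_of_forall_separating MeasurableSet
    intro V hV
    have hm : MeasurableSet ((f : X → ℂ) ⁻¹' V) :=
      (Lp.stronglyMeasurable f).measurable hV
    by_cases h : 0 < μ.real ((f : X → ℂ) ⁻¹' V)
    · left
      have h1 := hcon _ hm h
      have h2 : μ.real ((f : X → ℂ) ⁻¹' V)ᶜ = 0 := by
        rw [probReal_compl_eq_one_sub hm]
        linarith [measureReal_nonneg (μ := μ) (s := ((f : X → ℂ) ⁻¹' V)ᶜ),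
          probReal_compl_eq_one_sub (μ := μ) hm]
      exact (measureReal_eq_zero_iff).1 h2
    · right
      have h2 : μ.real ((f : X → ℂ) ⁻¹' V) = 0 := le_antisymm (not_lt.1 h) measureReal_nonneg
      exact measure_eq_zero_iff_ae_notMem.1 ((measureReal_eq_zero_iff).1 h2)
  obtain ⟨a, ha⟩ := hc
  have : a = 0 := by
    rw [integral_congr_ae ha] at hf
    simpa using hf
  subst this
  rw [Lp.eq_zero_iff_ae_eq_zero]
  exact ha

theorem aux_image {X : Type*} [MeasurableSpace X] (T : X ≃ᵐ X) (k : ℕ) (B : Set X) :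
    (⇑T)^[k] '' B = (⇑T.symm)^[k] ⁻¹' B :=
  Set.image_eq_preimage_of_inverse
    (Function.LeftInverse.iterate T.symm_apply_apply k)
    (Function.LeftInverse.iterate T.apply_symm_apply k) ▸ rfl

theorem aux_small {X : Type*} [MeasurableSpace X] (μ : Measure X) [IsProbabilityMeasure μ]
    (T : X ≃ᵐ X)
    (hmix : ∀ A B : Set X, MeasurableSet A → MeasurableSet B →
      Tendsto (fun m : ℕ => μ (A ∩ (⇑T)^[m] '' B)) atTop (nhds (μ A * μ B)))
    (A : Set X) (hA : MeasurableSet A) (hA0 : 0 < μ.real A) (hA1 : μ.real A < 1)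
    (ε : ℝ) (hε : 0 < ε) :
    ∃ B, MeasurableSet B ∧ 0 < μ.real B ∧ μ.real B < ε := by
  set a := μ.real A with ha
  set c := (1 + a) / 2 with hc
  have hac : a < c := by linarith
  have hc1 : c < 1 := by linarith
  have hc0 : 0 < c := by linarith
  have step : ∀ n : ℕ, ∃ B, MeasurableSet B ∧ 0 < μ.real B ∧ μ.real B ≤ a ∧ μ.real B ≤ c ^ n := by
    intro n
    induction n with
    | zero => exact ⟨A, hA, hA0, le_rfl, by simp⟩
    | succ n ih =>
      obtain ⟨B, hB, hB0, hBa, hBn⟩ := ih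
      have h := (ENNReal.tendsto_toReal (by finiteness)).comp (hmix B B hB hB)
      rw [ENNReal.toReal_mul] at h
      have hpos : 0 < (μ B).toReal * (μ B).toReal := mul_pos hB0 hB0
      have hlt : (μ B).toReal * (μ B).toReal < μ.real B * c :=
        mul_lt_mul_of_pos_left (lt_of_le_of_lt hBa hac) hB0
      obtain ⟨k, hk1, hk2⟩ := ((h.eventually_const_lt hpos).and (h.eventually_lt_const hlt)).exists
      refine ⟨B ∩ (⇑T)^[k] '' B, ?_, hk1, ?_, ?_⟩
      · rw [aux_image]
        exact hB.inter (T.symm.measurable.iterate k hB)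
      · exact (measureReal_mono Set.inter_subset_left).trans hBa
      · have : μ.real (B ∩ (⇑T)^[k] '' B) < μ.real B * c := hk2
        rw [pow_succ]
        nlinarith
  obtain ⟨n, hn⟩ := exists_pow_lt_of_lt_one hε hc1
  obtain ⟨B, hB, hB0, _, hBn⟩ := step n
  exact ⟨B, hB, hB0, hBn.trans_lt hn⟩

theorem aux_iter {X : Type*} [MeasurableSpace X] (μ : Measure X)
    (T : X ≃ᵐ X) (hT : MeasurePreserving T μ μ)
    (U : Lp ℂ 2 μ ≃ₗᵢ[ℂ] Lp ℂ 2 μ)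
    (hU : ∀ f : Lp ℂ 2 μ, (U f : X → ℂ) =ᵐ[μ] fun x => f (T.symm x))
    (f : Lp ℂ 2 μ) (k : ℕ) : ((U ^ (k : ℤ)) f : X → ℂ) =ᵐ[μ] fun x => f ((⇑T.symm)^[k] x) := by
  induction k with
  | zero => simp
  | succ k ih =>
    have h1 : (U ^ ((k + 1 : ℕ) : ℤ)) f = U ((U ^ (k : ℤ)) f) := by
      rw [Nat.cast_add, Nat.cast_one, add_comm, zpow_add, zpow_one]
      rfl
    rw [h1]
    refine (hU _).trans ?_
    have h2 := (hT.symm T).quasiMeasurePreserving.ae_eq_comp ih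
    refine h2.trans (Eventually.of_forall fun x => ?_)
    simp [Function.iterate_succ_apply]

theorem aux_spec {X : Type*} [MeasurableSpace X] (μ : Measure X)
    (U : Lp ℂ 2 μ ≃ₗᵢ[ℂ] Lp ℂ 2 μ) (f : Lp ℂ 2 μ)
    (σf : Measure (AddCircle (1 : ℝ)))
    (hσ : ∀ n : ℤ, ⟪(U ^ n) f, f⟫_ℂ = ∫ z, fourier n z ∂σf)
    (δ : ℝ) (hδ : 0 < δ) (h0 : ∀ᵐ z ∂σf, δ ≤ ‖(fourier 1 z : ℂ) - 1‖) (K : ℕ) :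
    ‖∑ j ∈ Finset.range K, (U ^ (j : ℤ)) f‖ ^ 2 ≤ (2 / δ) ^ 2 * ‖f‖ ^ 2 := by
  by_cases hf0 : f = 0
  · subst hf0; simp
  have hz : ((‖f‖ ^ 2 : ℝ) : ℂ) = (σf.real Set.univ : ℂ) := by
    have := hσ 0
    simp only [zpow_zero, fourier_zero, integral_const] at this
    rw [show (1 : Lp ℂ 2 μ ≃ₗᵢ[ℂ] Lp ℂ 2 μ) f = f from rfl, inner_self_eq_norm_sq_to_K] at this
    simpa using this
  have hz' : ‖f‖ ^ 2 = σf.real Set.univ := by exact_mod_cast hz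
  have hfin : IsFiniteMeasure σf := by
    refine ⟨lt_top_iff_ne_top.2 fun h => ?_⟩
    rw [Measure.real, h] at hz'
    simp [hf0] at hz'
  have hint : ∀ n : ℤ, Integrable (fun z => (fourier n z : ℂ)) σf := fun n =>
    Integrable.of_bound (fourier n).continuous.aestronglyMeasurable 1
      (Eventually.of_forall fun z => by rw [fourier_apply, Circle.norm_coe])
  have hin : ∀ j k : ℕ, ⟪(U ^ (j : ℤ)) f, (U ^ (k : ℤ)) f⟫_ℂ
      = ∫ z, fourier ((j : ℤ) - k) z ∂σf := by
    intro j k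
    rw [← hσ, ← LinearIsometryEquiv.inner_map_map (U ^ (k : ℤ)) ((U ^ ((j : ℤ) - k)) f) f]
    congr 1
    have e : U ^ (j : ℤ) = U ^ (k : ℤ) * U ^ ((j : ℤ) - k) := by
      rw [← zpow_add]
      congr 1
      ring
    rw [e]
    rfl
  have hS : ((‖∑ j ∈ Finset.range K, (U ^ (j : ℤ)) f‖ ^ 2 : ℝ) : ℂ)
      = ((∫ z, ‖∑ j ∈ Finset.range K, (fourier (j : ℤ) z : ℂ)‖ ^ 2 ∂σf : ℝ) : ℂ) := by
    rw [← integral_complex_ofReal]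
    have := inner_self_eq_norm_sq_to_K (𝕜 := ℂ) (∑ j ∈ Finset.range K, (U ^ (j : ℤ)) f)
    push_cast at this ⊢
    refine Eq.trans this.symm ?_
    rw [sum_inner]
    simp_rw [inner_sum, hin]
    have hpt : ∀ z : AddCircle (1 : ℝ),
        (↑‖∑ j ∈ Finset.range K, (fourier (j : ℤ) z : ℂ)‖ : ℂ) ^ 2
        = ∑ j ∈ Finset.range K, ∑ k ∈ Finset.range K, (fourier ((j : ℤ) - k) z : ℂ) := by
      intro z
      rw [← Complex.mul_conj', map_sum, Finset.sum_mul_sum]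
      refine Finset.sum_congr rfl fun j _ => Finset.sum_congr rfl fun k _ => ?_
      rw [sub_eq_add_neg, fourier_add, fourier_neg]
    simp_rw [hpt]
    rw [integral_finsetSum _ fun j _ => integrable_finsetSum _ fun k _ => hint _]
    refine Finset.sum_congr rfl fun j _ => ?_
    rw [integral_finsetSum _ fun k _ => hint _]
  have hS' : ‖∑ j ∈ Finset.range K, (U ^ (j : ℤ)) f‖ ^ 2
      = ∫ z, ‖∑ j ∈ Finset.range K, (fourier (j : ℤ) z : ℂ)‖ ^ 2 ∂σf := by exact_mod_cast hS
  rw [hS', hz']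
  have hb : ∀ᵐ z ∂σf, ‖∑ j ∈ Finset.range K, (fourier (j : ℤ) z : ℂ)‖ ^ 2 ≤ (2 / δ) ^ 2 := by
    filter_upwards [h0] with z hz
    have e : ∀ j : ℕ, (fourier (j : ℤ) z : ℂ) = (fourier 1 z : ℂ) ^ j := by
      intro j
      simp only [fourier_apply, natCast_zsmul, one_zsmul, AddCircle.toCircle_nsmul, Circle.coe_pow]
    have hne : (fourier 1 z : ℂ) - 1 ≠ 0 := by
      intro h; rw [h] at hz; simp at hz; linarith
    simp_rw [e]
    rw [geom_sum_eq (sub_ne_zero.1 hne), norm_div]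
    gcongr
    refine (norm_sub_le _ _).trans ?_
    rw [norm_pow]
    have : ‖(fourier 1 z : ℂ)‖ = 1 := by rw [fourier_apply, Circle.norm_coe]
    rw [this]; norm_num
  calc ∫ z, ‖∑ j ∈ Finset.range K, (fourier (j : ℤ) z : ℂ)‖ ^ 2 ∂σf
      ≤ ∫ z, (2 / δ) ^ 2 ∂σf := by
        apply integral_mono_of_nonneg _ (integrable_const _) hb
        exact Eventually.of_forall fun z => by positivity
    _ = _ := by simp [mul_comm]

theorem aux_delta (N : Set (AddCircle (1 : ℝ))) (hN : N ∈ nhds (0 : AddCircle (1 : ℝ))) :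
    ∃ δ : ℝ, 0 < δ ∧ ∀ z, ‖(fourier 1 z : ℂ) - 1‖ < δ → z ∈ N := by
  have hinj : Function.Injective (fun z : AddCircle (1 : ℝ) => (fourier 1 z : ℂ)) := by
    intro x y h
    simp only [fourier_apply, one_zsmul] at h
    exact AddCircle.injective_toCircle one_ne_zero (Circle.ext h)
  have hemb := (fourier (T := (1 : ℝ)) 1).continuous.isClosedEmbedding hinj
  rw [hemb.isInducing.nhds_eq_comap] at hN
  obtain ⟨V, hV, hVN⟩ := hN
  obtain ⟨δ, hδ, hball⟩ := Metric.mem_nhds_iff.1 hV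
  refine ⟨δ, hδ, fun z hz => hVN (hball ?_)⟩
  have h1 : (fourier 1 (0 : AddCircle (1 : ℝ)) : ℂ) = 1 := by simp [fourier_apply]
  rw [h1, Metric.mem_ball, dist_eq_norm]
  exact hz

theorem aux_lower {X : Type*} [MeasurableSpace X] (μ : Measure X) [IsProbabilityMeasure μ]
    (T : X ≃ᵐ X) (hT : MeasurePreserving T μ μ)
    (U : Lp ℂ 2 μ ≃ₗᵢ[ℂ] Lp ℂ 2 μ)
    (hU : ∀ f : Lp ℂ 2 μ, (U f : X → ℂ) =ᵐ[μ] fun x => f (T.symm x))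
    (B : Set X) (hB : MeasurableSet B) (K : ℕ) (hK : K * μ.real B ≤ 1 / 2) :
    ∃ g : Lp ℂ 2 μ, ∫ x, g x ∂μ = 0 ∧ ‖g‖ ^ 2 ≤ 4 * μ.real B ∧
      K * μ.real B / 2 ≤ ‖∑ j ∈ Finset.range K, (U ^ (j : ℤ)) g‖ := by
  set b := μ.real B with hb
  have hb0 : 0 ≤ b := measureReal_nonneg
  have hb1 : b ≤ 1 := measureReal_le_one
  let u : Lp ℂ 2 μ := indicatorConstLp 2 hB (measure_ne_top μ B) (1 : ℂ)
  let v : Lp ℂ 2 μ := indicatorConstLp 2 MeasurableSet.univ (measure_ne_top μ Set.univ) (1 : ℂ)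
  let g : Lp ℂ 2 μ := u - (b : ℂ) • v
  have hmp : ∀ k : ℕ, MeasurePreserving ((⇑T.symm)^[k]) μ μ := fun k => (hT.symm T).iterate k
  have hgae : ∀ᵐ x ∂μ, x ∉ B → g x = -(b : ℂ) := by
    filter_upwards [Lp.coeFn_sub u ((b : ℂ) • v), Lp.coeFn_smul (b : ℂ) v,
      indicatorConstLp_coeFn_notMem (p := 2) (hs := hB) (hμs := measure_ne_top μ B) (c := (1 : ℂ)),
      indicatorConstLp_coeFn_mem (p := 2) (hs := MeasurableSet.univ)
        (hμs := measure_ne_top μ Set.univ) (c := (1 : ℂ))] with x h1 h2 h3 h4 hx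
    have h3' : u x = 0 := h3 hx
    have h4' : v x = 1 := h4 (Set.mem_univ x)
    change (u - (b : ℂ) • v) x = _
    rw [h1, Pi.sub_apply, h2, Pi.smul_apply, h3', h4']
    simp
  refine ⟨g, ?_, ?_, ?_⟩
  · have h := L2.inner_indicatorConstLp_one (𝕜 := ℂ) MeasurableSet.univ
      (measure_ne_top μ Set.univ) g
    rw [setIntegral_univ] at h
    rw [← h]
    change ⟪v, u - (b : ℂ) • v⟫_ℂ = 0
    rw [inner_sub_right, inner_smul_right]
    simp only [u, v, L2.inner_indicatorConstLp_one_indicatorConstLp_one]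
    simp [hb]
  · have h1 : ‖u‖ = Real.sqrt b := by
      simp [u, norm_indicatorConstLp, Real.sqrt_eq_rpow, hb]
    have h2 : ‖v‖ = 1 := by
      simp only [v, norm_indicatorConstLp two_ne_zero ENNReal.ofNat_ne_top]
      simp
    have h3 : ‖g‖ ≤ Real.sqrt b + b := by
      refine (norm_sub_le _ _).trans ?_
      rw [norm_smul, h1, h2, Complex.norm_real, Real.norm_of_nonneg hb0, mul_one]
    have h4 : Real.sqrt b ^ 2 = b := Real.sq_sqrt hb0
    have h5 : b ≤ Real.sqrt b := Real.le_sqrt_of_sq_le (by nlinarith)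
    nlinarith [norm_nonneg g, Real.sqrt_nonneg b]
  · let W : Set X := ⋃ k ∈ Finset.range K, (⇑T.symm)^[k] ⁻¹' B
    have hW : MeasurableSet W :=
      Finset.measurableSet_biUnion _ fun k _ => (hmp k).measurable hB
    have hWle : μ.real W ≤ K * b := by
      refine (measureReal_biUnion_finset_le _ _).trans ?_
      have : ∀ k ∈ Finset.range K, μ.real ((⇑T.symm)^[k] ⁻¹' B) = b := by
        intro k _
        rw [Measure.real, (hmp k).measure_preimage hB.nullMeasurableSet]
        rfl
      rw [Finset.sum_congr rfl this]
      simp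
    have hw : 1 / 2 ≤ μ.real Wᶜ := by
      rw [probReal_compl_eq_one_sub hW]; linarith
    let e : Lp ℂ 2 μ := indicatorConstLp 2 hW.compl (measure_ne_top μ Wᶜ) (1 : ℂ)
    have he : ‖e‖ ≤ 1 := by
      simp only [e, norm_indicatorConstLp two_ne_zero ENNReal.ofNat_ne_top, norm_one, one_mul]
      exact Real.rpow_le_one measureReal_nonneg measureReal_le_one (by positivity)
    have hterm : ∀ k ∈ Finset.range K, ⟪e, (U ^ (k : ℤ)) g⟫_ℂ = -((b * μ.real Wᶜ : ℝ) : ℂ) := by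
      intro k hk
      rw [L2.inner_indicatorConstLp_one]
      have : ∫ x in Wᶜ, ((U ^ (k : ℤ)) g : X → ℂ) x ∂μ = ∫ x in Wᶜ, -(b : ℂ) ∂μ := by
        apply setIntegral_congr_ae hW.compl
        filter_upwards [aux_iter μ T hT U hU g k,
          (hmp k).quasiMeasurePreserving.ae hgae] with x h1 h2 hx
        rw [h1]
        apply h2
        intro h
        exact hx (Set.mem_biUnion hk h)
      rw [this, setIntegral_const]
      simp [mul_comm]
    have hin := norm_inner_le_norm (𝕜 := ℂ) e (∑ j ∈ Finset.range K, (U ^ (j : ℤ)) g)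
    rw [inner_sum, Finset.sum_congr rfl hterm, Finset.sum_const, Finset.card_range, nsmul_eq_mul,
      norm_mul, norm_neg, Complex.norm_real, Complex.norm_natCast,
      Real.norm_of_nonneg (mul_nonneg hb0 measureReal_nonneg)] at hin
    have h6 : ‖e‖ * ‖∑ j ∈ Finset.range K, (U ^ (j : ℤ)) g‖
        ≤ 1 * ‖∑ j ∈ Finset.range K, (U ^ (j : ℤ)) g‖ := by gcongr
    have h7 : (K : ℝ) * b * (1 / 2) ≤ K * b * μ.real Wᶜ := by gcongr
    linarith

theorem aux_zero_mem_support {X : Type*} [MeasurableSpace X]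
    (μ : Measure X) [IsProbabilityMeasure μ]
    (T : X ≃ᵐ X) (hT : MeasurePreserving T μ μ)
    (hmix : ∀ A B : Set X, MeasurableSet A → MeasurableSet B →
      Tendsto (fun m : ℕ => μ (A ∩ (⇑T)^[m] '' B)) atTop (nhds (μ A * μ B)))
    (U : Lp ℂ 2 μ ≃ₗᵢ[ℂ] Lp ℂ 2 μ)
    (hU : ∀ f : Lp ℂ 2 μ, (U f : X → ℂ) =ᵐ[μ] fun x => f (T.symm x))
    (σ : Measure (AddCircle (1 : ℝ))) [IsFiniteMeasure σ]
    (hspec : ∀ f : Lp ℂ 2 μ, ∫ x, f x ∂μ = 0 →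
      ∃ σf : Measure (AddCircle (1 : ℝ)), σf ≪ σ ∧
        ∀ n : ℤ, ⟪(U ^ n) f, f⟫_ℂ = ∫ z, fourier n z ∂σf)
    (hmax : ∃ f : Lp ℂ 2 μ, ∫ x, f x ∂μ = 0 ∧
      ∀ n : ℤ, ⟪(U ^ n) f, f⟫_ℂ = ∫ z, fourier n z ∂σ)
    (hσ : σ ≠ 0) :
    ∀ N ∈ nhds (0 : AddCircle (1 : ℝ)), σ N ≠ 0 := by
  intro N hN hN0
  obtain ⟨δ, hδ, hδN⟩ := aux_delta N hN
  obtain ⟨f, hf, hfs⟩ := hmax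
  have hf0 : f ≠ 0 := by
    rintro rfl
    have h := hfs 0
    simp only [fourier_zero, integral_const, inner_zero_right] at h
    apply hσ
    have h' : σ.real Set.univ = 0 := by
      have h2 : (0 : ℂ) = (σ.real Set.univ : ℂ) := by simpa using h
      exact_mod_cast h2.symm
    exact Measure.measure_univ_eq_zero.1 ((measureReal_eq_zero_iff).1 h')
  obtain ⟨A, hA, hA0, hA1⟩ := aux_exists_set μ f hf hf0
  have hC : 0 < (2 / δ) ^ 2 := by positivity
  obtain ⟨B, hB, hB0, hBε⟩ := aux_small μ T hmix A hA hA0 hA1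
    (min (1 / 4) (1 / (256 * (2 / δ) ^ 2))) (by positivity)
  have hB1 := hBε.trans_le (min_le_left _ _)
  have hB2 := hBε.trans_le (min_le_right _ _)
  rw [lt_div_iff₀ (by positivity)] at hB2
  set b := μ.real B with hb
  set K := ⌊1 / (2 * b)⌋₊ with hKdef
  have hK1 : (K : ℝ) * b ≤ 1 / 2 := by
    have := Nat.floor_le (a := 1 / (2 * b)) (by positivity)
    rw [← hKdef, le_div_iff₀ (by positivity)] at this
    linarith
  have hK2 : 1 / 4 < (K : ℝ) * b := by
    have := Nat.lt_floor_add_one (1 / (2 * b))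
    rw [← hKdef, div_lt_iff₀ (by positivity)] at this
    linarith
  obtain ⟨g, hg0, hgn, hgl⟩ := aux_lower μ T hT U hU B hB K hK1
  obtain ⟨σg, hac, hσg⟩ := hspec g hg0
  have hae : ∀ᵐ z ∂σg, δ ≤ ‖(fourier 1 z : ℂ) - 1‖ := by
    refine measure_mono_null ?_ (hac hN0)
    intro z hz
    exact hδN z (not_le.1 hz)
  have hup := aux_spec μ U g σg hσg δ hδ hae K
  have h1 : (1 / 8 : ℝ) ≤ ‖∑ j ∈ Finset.range K, (U ^ (j : ℤ)) g‖ := by linarith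
  have h2 : (1 / 8 : ℝ) ^ 2 ≤ ‖∑ j ∈ Finset.range K, (U ^ (j : ℤ)) g‖ ^ 2 := by gcongr
  have h3 : (2 / δ) ^ 2 * ‖g‖ ^ 2 ≤ (2 / δ) ^ 2 * (4 * b) := by gcongr
  linarith

/-- If the maximal spectral type `σ` of a mixing automorphism `T` has, for some `m ≠ n`,
mutually singular convolution powers `σ^{*m}` and `σ^{*n}`, then `σ` is singular with
respect to Lebesgue (Haar) measure on the circle. -/
theorem spectral_type_singular_of_singular_convolution_powers
    {X : Type*} [MeasurableSpace X] [StandardBorelSpace X]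
    (μ : Measure X) [IsProbabilityMeasure μ]
    (T : X ≃ᵐ X) (hT : MeasurePreserving T μ μ)
    (hmix : ∀ A B : Set X, MeasurableSet A → MeasurableSet B →
      Tendsto (fun m : ℕ => μ (A ∩ (⇑T)^[m] '' B)) atTop (nhds (μ A * μ B)))
    (U : Lp ℂ 2 μ ≃ₗᵢ[ℂ] Lp ℂ 2 μ)
    (hU : ∀ f : Lp ℂ 2 μ, (U f : X → ℂ) =ᵐ[μ] fun x => f (T.symm x))
    -- σ : the maximal spectral type of U on the mean-zero subspace H
    (σ : Measure (AddCircle (1 : ℝ))) [IsFiniteMeasure σ]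
    (hspec : ∀ f : Lp ℂ 2 μ, ∫ x, f x ∂μ = 0 →
      ∃ σf : Measure (AddCircle (1 : ℝ)), σf ≪ σ ∧
        ∀ n : ℤ, ⟪(U ^ n) f, f⟫_ℂ = ∫ z, fourier n z ∂σf)
    (hmax : ∃ f : Lp ℂ 2 μ, ∫ x, f x ∂μ = 0 ∧
      ∀ n : ℤ, ⟪(U ^ n) f, f⟫_ℂ = ∫ z, fourier n z ∂σ)
    (m n : ℕ) (hm : 1 ≤ m) (hn : 1 ≤ n) (hmn : m ≠ n)
    (hsing : convPow σ m ⟂ₘ convPow σ n) :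
    σ ⟂ₘ (MeasureTheory.volume : Measure (AddCircle (1 : ℝ))) := by
  by_contra hns
  have hσ0 : σ ≠ 0 := by
    rintro rfl
    exact hns Measure.MutuallySingular.zero_left
  have h0 := aux_zero_mem_support μ T hT hmix U hU σ hspec hmax hσ0
  rcases lt_or_gt_of_ne hmn with h | h
  · obtain ⟨k, rfl⟩ := Nat.exists_eq_add_of_le' h.le
    exact aux_main σ h0 hns m k hm hsing
  · obtain ⟨k, rfl⟩ := Nat.exists_eq_add_of_le' h.le
    exact aux_main σ h0 hns n k hn hsing.symm
end
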